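/- Let W be a channel with finite input alphabet 𝒳, finite output alphabet 𝒴, and input distribution q. Define the Gallager function E₀(ρ) = -log₂ ∑_{y} (∑_{x} q(x) W(y|x)^{1/(1+ρ)})^{1+ρ}. Then for any r₀ ∈ (-1,0) and any bias b, the semi-invariant MGF of the metric γ = log₂(W(Y|X)/P(Y)) - b, where (X,Y) ~ q(x)W(y|x) and P(y) = ∑_x q(x)W(y|x), satisfies log₂ E[2^{r₀ γ}] ≤ -r₀ b - (1+r₀) E₀(-r₀/(1+r₀)). -/

import Mathlib

open Finset

/-- Lemma 1: upper bound on the semi-invariant MGF of the correct-path metric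
`γ = log₂(W(Y|X)/P(Y)) - b` in terms of the Gallager function `E₀`:
for `r₀ ∈ (-1,0)`, `log₂ E[2^{r₀ γ}] ≤ -r₀ b - (1+r₀) E₀(-r₀/(1+r₀))`. -/
theorem mgf_correct_path_le_gallager
    {𝒳 𝒴 : Type*} [Fintype 𝒳] [Fintype 𝒴]
    (W : 𝒳 → 𝒴 → ℝ) (q : 𝒳 → ℝ) (b r₀ : ℝ)
    (hW : ∀ x y, 0 < W x y) (hWrow : ∀ x, ∑ y, W x y = 1)
    (hq : ∀ x, 0 ≤ q x) (hq1 : ∑ x, q x = 1)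
    (P : 𝒴 → ℝ) (hP : ∀ y, P y = ∑ x, q x * W x y)
    (hPpos : ∀ y, 0 < P y)
    (E₀ : ℝ → ℝ)
    (hE₀ : ∀ ρ, E₀ ρ =
      -Real.logb 2 (∑ y, (∑ x, q x * W x y ^ (1 / (1 + ρ))) ^ (1 + ρ)))
    (hr₀ : r₀ ∈ Set.Ioo (-1 : ℝ) 0) :
    Real.logb 2
        (∑ x, ∑ y, q x * W x y *
          (2 : ℝ) ^ (r₀ * (Real.logb 2 (W x y / P y) - b)))
      ≤ -r₀ * b - (1 + r₀) * E₀ (-r₀ / (1 + r₀)) := by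
  obtain ⟨h1, h2⟩ := hr₀
  have hs : 0 < 1 + r₀ := by linarith
  have hsne : 1 + r₀ ≠ 0 := hs.ne'
  have ht : 0 < -r₀ := by linarith
  have hρ : 1 + -r₀ / (1 + r₀) = 1 / (1 + r₀) := by field_simp; ring
  obtain ⟨x₀, hx₀⟩ : ∃ x, 0 < q x := by
    by_contra hcon
    push Not at hcon
    have : ∑ x, q x ≤ 0 := Finset.sum_nonpos fun x _ => hcon x
    linarith
  have hYne : (Finset.univ : Finset 𝒴).Nonempty := by
    by_contra hcon
    rw [Finset.not_nonempty_iff_eq_empty] at hcon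
    have := hWrow x₀
    rw [hcon] at this
    simp at this
  have hA : ∀ y, 0 < ∑ x, q x * W x y ^ (1 + r₀) := fun y =>
    Finset.sum_pos' (fun x _ => mul_nonneg (hq x) (Real.rpow_pos_of_pos (hW x y) _).le)
      ⟨x₀, Finset.mem_univ _, mul_pos hx₀ (Real.rpow_pos_of_pos (hW x₀ y) _)⟩
  have hPsum : ∑ y, P y = 1 := by
    simp_rw [hP]
    rw [Finset.sum_comm]
    simp_rw [← Finset.mul_sum, hWrow, mul_one]
    exact hq1
  have hterm : ∀ x y, q x * W x y * (2 : ℝ) ^ (r₀ * (Real.logb 2 (W x y / P y) - b))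
      = (2 : ℝ) ^ (-r₀ * b) * (P y ^ (-r₀) * (q x * W x y ^ (1 + r₀))) := by
    intro x y
    have e : r₀ * (Real.logb 2 (W x y / P y) - b)
        = Real.logb 2 (W x y / P y) * r₀ + -r₀ * b := by ring
    rw [e, Real.rpow_add two_pos, Real.rpow_mul two_pos.le,
      Real.rpow_logb two_pos (by norm_num) (div_pos (hW x y) (hPpos y)),
      Real.div_rpow (hW x y).le (hPpos y).le, Real.rpow_add (hW x y), Real.rpow_one,
      Real.rpow_neg (hPpos y).le]
    ring
  have hsum : ∑ x, ∑ y, q x * W x y * (2 : ℝ) ^ (r₀ * (Real.logb 2 (W x y / P y) - b))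
      = (2 : ℝ) ^ (-r₀ * b) * ∑ y, P y ^ (-r₀) * ∑ x, q x * W x y ^ (1 + r₀) := by
    simp_rw [hterm]
    rw [Finset.sum_comm]
    simp_rw [Finset.mul_sum]
  have hpos : 0 < ∑ y, P y ^ (-r₀) * ∑ x, q x * W x y ^ (1 + r₀) :=
    Finset.sum_pos (fun y _ => mul_pos (Real.rpow_pos_of_pos (hPpos y) _) (hA y)) hYne
  have hBpos : 0 < ∑ y, (∑ x, q x * W x y ^ (1 + r₀)) ^ (1 / (1 + r₀)) :=
    Finset.sum_pos (fun y _ => Real.rpow_pos_of_pos (hA y) _) hYne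
  have hconj : Real.HolderConjugate (1 / (-r₀)) (1 / (1 + r₀)) := by
    rw [Real.holderConjugate_iff]
    refine ⟨?_, ?_⟩
    · rw [lt_div_iff₀ ht]; linarith
    · simp
  have hold := Real.inner_le_Lp_mul_Lq_of_nonneg Finset.univ hconj
    (f := fun y => P y ^ (-r₀)) (g := fun y => ∑ x, q x * W x y ^ (1 + r₀))
    (fun y _ => (Real.rpow_pos_of_pos (hPpos y) _).le) (fun y _ => (hA y).le)
  have hPP : ∀ y, (P y ^ (-r₀)) ^ (1 / (-r₀)) = P y := by
    intro y
    rw [← Real.rpow_mul (hPpos y).le, mul_one_div_cancel ht.ne', Real.rpow_one]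
  simp only [hPP, hPsum, Real.one_rpow, one_mul, one_div_one_div] at hold
  rw [hsum, hE₀, hρ, one_div_one_div, Real.logb_mul (Real.rpow_pos_of_pos two_pos _).ne' hpos.ne',
    Real.logb_rpow two_pos (by norm_num)]
  have hlog := Real.logb_le_logb_of_le (b := 2) (by norm_num) hpos hold
  rw [Real.logb_rpow_eq_mul_logb_of_pos hBpos] at hlog
  linarith
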